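/- arXiv:1210.3488 — 2 statements merged into one kernel-verified Lean document; each statement's English description precedes it below -/
import Mathlib

section
/- Let n ≥ 2 and let R be a commutative domain with 1/2 ∈ R. If l : T_n(R) → T_n(R) is a Lie isomorphism of the algebra of n×n upper triangular matrices over R, then l = m + n₀, where m : T_n(R) → T_n(R) is an algebra isomorphism or the negative of an algebra anti-isomorphism, and n₀ : T_n(R) → R·1 is an R-linear map with n₀([x, y]) = 0 for all x, y ∈ T_n(R). -/
open Matrix

set_option synthInstance.maxHeartbeats 1000000
set_option maxHeartbeats 1000000

/-- The algebra `T_n(R)` of `n × n` upper triangular matrices over `R`,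
realized as a subalgebra of the full matrix algebra. -/
def upperTriangularAlgebra (n : ℕ) (R : Type*) [CommRing R] :
    Subalgebra R (Matrix (Fin n) (Fin n) R) where
  carrier := {x | x.BlockTriangular (id : Fin n → Fin n)}
  add_mem' hx hy := hx.add hy
  mul_mem' hx hy := hx.mul hy
  algebraMap_mem' r := by
    intro i j hij
    rw [Matrix.algebraMap_matrix_apply]
    simp only [id] at hij
    rw [if_neg (by omega : ¬ i = j)]

/-!
The ideals `band (k + 1)` are spanned by iterated brackets, so a Lie automorphism `l` preserves
them. The diagonal idempotents `s_k = e_00 + ⋯ + e_(k-1)(k-1)` satisfy `ad (s_k) ^ 2 = ad (s_k)`,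
so the roots of `l s_k` are idempotent scalars, i.e. `0` or `1`; comparing the eigenvalues of
`ad (s_k)` and `ad (l s_k)` on the graded pieces of the filtration by `band` shows that `l` permutes
the roots of each height. The roots of heights one and two determine the path formed by the simple
roots, so this permutation is the identity or the reversal, and the reversal is undone by the
negative of the reflection in the antidiagonal.

Once `l` fixes the simple roots, it changes all diagonal entries of `x` by a common scalar `c x`,
and `m = l - c` fixes the diagonal. Then every `m s_k` is idempotent, and the chain of idempotents
`m s_0 ≤ m s_1 ≤ ⋯` forces the elements `m e_ij` to multiply like matrix units.
-/

namespace upperTriangularAlgebra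

variable {n : ℕ} {R : Type*} [CommRing R]

attribute [local instance 100] LieRing.ofAssociativeRing

local notation "T" => upperTriangularAlgebra n R

theorem apply_eq_zero_of_lt (x : T) {i j : Fin n} (h : j < i) : x.1 i j = 0 :=
  x.2 h

theorem ext_apply {x y : T} (h : ∀ i j, x.1 i j = y.1 i j) : x = y :=
  Subtype.ext (Matrix.ext h)

variable (R) in
/-- The matrix unit `e_ij` of the upper triangular algebra, for `i ≤ j`. -/
def single {i j : Fin n} (hij : i ≤ j) : T :=
  ⟨Matrix.single i j 1, fun a b hab => Matrix.single_apply_of_ne _ _ _ _ _ (by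
    rintro ⟨rfl, rfl⟩
    exact hij.not_gt hab)⟩

theorem single_mul_single {i j k : Fin n} (hij : i ≤ j) (hjk : j ≤ k) :
    single R hij * single R hjk = single R (hij.trans hjk) :=
  Subtype.ext <| (Matrix.single_mul_single_same ..).trans (by rw [one_mul]; rfl)

theorem single_mul_single_of_ne {i j k l : Fin n} (hij : i ≤ j) (hkl : k ≤ l) (hjk : j ≠ k) :
    single R hij * single R hkl = 0 :=
  Subtype.ext <| Matrix.single_mul_single_of_ne _ _ _ _ hjk _

theorem lie_single_single {i j k : Fin n} (hij : i ≤ j) (hjk : j ≤ k) (hki : k ≠ i) :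
    ⁅single R hij, single R hjk⁆ = single R (hij.trans hjk) := by
  rw [Ring.lie_def, single_mul_single, single_mul_single_of_ne _ _ hki, sub_zero]

variable (n R) in
/-- The ideal of upper triangular matrices whose entries vanish strictly below the `k`-th
superdiagonal: everything for `k = 0`, the strictly upper triangular matrices for `k = 1`. -/
def band (k : ℕ) : Submodule R T where
  carrier := {x | ∀ i j : Fin n, (j : ℕ) < i + k → x.1 i j = 0}
  zero_mem' _ _ _ := rfl
  add_mem' {x y} hx hy i j h := by
    rw [AddMemClass.coe_add, Matrix.add_apply, hx i j h, hy i j h, add_zero]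
  smul_mem' r x hx i j h := by
    rw [SetLike.val_smul, Matrix.smul_apply, hx i j h, smul_zero]

theorem mem_band_zero (x : T) : x ∈ band n R 0 :=
  fun _ _ h => apply_eq_zero_of_lt x h

theorem mem_band_succ {k : ℕ} {x : T} (hx : x ∈ band n R k)
    (h : ∀ i j : Fin n, (i : ℕ) + k = j → x.1 i j = 0) : x ∈ band n R (k + 1) := fun i j hij =>
  (Nat.lt_or_ge j (i + k)).elim (hx i j) fun hle => h i j (by omega)

theorem eq_zero_of_forall_mem_band {x : T} (h : ∀ k, x ∈ band n R k) : x = 0 :=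
  ext_apply fun i j => h n i j (by omega)

theorem single_mem_band {k : ℕ} {i j : Fin n} (hij : i ≤ j) (h : (i : ℕ) + k ≤ j) :
    single R hij ∈ band n R k := fun a b hab =>
  Matrix.single_apply_of_ne _ _ _ _ _ (by
    rintro ⟨rfl, rfl⟩
    omega)

theorem single_notMem_band [Nontrivial R] {k : ℕ} {i j : Fin n} (hij : i ≤ j)
    (h : (j : ℕ) < i + k) : single R hij ∉ band n R k := fun hmem =>
  one_ne_zero ((Matrix.single_apply_same i j (1 : R)).symm.trans (hmem i j h))

theorem eq_sum_smul_single (x : T) :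
    x = ∑ i, ∑ j, if hij : i ≤ j then x.1 i j • single R hij else 0 := by
  apply Subtype.ext
  conv_lhs => rw [Matrix.matrix_eq_sum_single x.1]
  simp only [AddSubmonoidClass.coe_finsetSum]
  refine Finset.sum_congr rfl fun i _ => Finset.sum_congr rfl fun j _ => ?_
  split_ifs with hij
  · simp [single, Matrix.smul_single]
  · rw [apply_eq_zero_of_lt x (not_le.mp hij), Matrix.single_zero, ZeroMemClass.coe_zero]

theorem band_le {k : ℕ} {p : Submodule R T}
    (h : ∀ (i j : Fin n) (hij : i ≤ j), (i : ℕ) + k ≤ j → single R hij ∈ p) :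
    band n R k ≤ p := by
  intro x hx
  rw [eq_sum_smul_single x]
  refine sum_mem fun i _ => sum_mem fun j _ => ?_
  split_ifs with hij
  · by_cases hk : (i : ℕ) + k ≤ j
    · exact p.smul_mem _ (h i j hij hk)
    · rw [hx i j (not_le.mp hk), zero_smul]
      exact p.zero_mem
  · exact p.zero_mem

theorem linearMap_ext {M : Type*} [AddCommMonoid M] [Module R M] {f g : T →ₗ[R] M}
    (h : ∀ (i j : Fin n) (hij : i ≤ j), f (single R hij) = g (single R hij)) : f = g :=
  LinearMap.ext fun x =>
    band_le (p := LinearMap.eqLocus f g) (fun i j hij _ => h i j hij) (mem_band_zero x)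

theorem mul_mem_band {a b : ℕ} {x y : T} (hx : x ∈ band n R a) (hy : y ∈ band n R b) :
    x * y ∈ band n R (a + b) := by
  intro i j hij
  rw [MulMemClass.coe_mul, Matrix.mul_apply]
  refine Finset.sum_eq_zero fun k _ => ?_
  by_cases hk : (k : ℕ) < i + a
  · rw [hx i k hk, zero_mul]
  · rw [hy k j (by omega), mul_zero]

theorem mul_apply_of_mem_band {a b : ℕ} {x y : T} (hx : x ∈ band n R a) (hy : y ∈ band n R b)
    {i k j : Fin n} (hik : (i : ℕ) + a = k) (hkj : (k : ℕ) + b = j) :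
    (x * y).1 i j = x.1 i k * y.1 k j := by
  rw [MulMemClass.coe_mul, Matrix.mul_apply]
  refine Finset.sum_eq_single k (fun q _ hqk => ?_) (by simp)
  by_cases hq : (q : ℕ) < i + a
  · rw [hx i q hq, zero_mul]
  · rw [hy q j (by have := Fin.val_ne_of_ne hqk; omega), mul_zero]

theorem lie_mem_band {a b : ℕ} {x y : T} (hx : x ∈ band n R a) (hy : y ∈ band n R b) :
    ⁅x, y⁆ ∈ band n R (a + b) :=
  sub_mem (mul_mem_band hx hy) (add_comm b a ▸ mul_mem_band hy hx)

variable (R) in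
/-- The `i`-th diagonal entry, as a linear functional. -/
def diagEntry (i : Fin n) : T →ₗ[R] R :=
  Matrix.entryLinearMap R R i i ∘ₗ (upperTriangularAlgebra n R).val.toLinearMap

theorem diagEntry_mul (i : Fin n) (x y : T) :
    diagEntry R i (x * y) = diagEntry R i x * diagEntry R i y :=
  mul_apply_of_mem_band (mem_band_zero x) (mem_band_zero y) rfl rfl

theorem diagEntry_one (i : Fin n) : diagEntry R i (1 : T) = 1 :=
  Matrix.one_apply_eq i

variable (R) in
/-- The root `x ↦ x_ii - x_jj`, by which the diagonal part of `x` acts on the matrix unit `e_ij`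
under the bracket. -/
def root (i j : Fin n) : T →ₗ[R] R :=
  diagEntry R i - diagEntry R j

theorem lie_apply_of_mem_band (x : T) {d : ℕ} {y : T} (hy : y ∈ band n R d) {i j : Fin n}
    (hij : (i : ℕ) + d = j) : ⁅x, y⁆.1 i j = root R i j x * y.1 i j := by
  rw [Ring.lie_def, AddSubgroupClass.coe_sub, Matrix.sub_apply,
    mul_apply_of_mem_band (mem_band_zero x) hy rfl hij,
    mul_apply_of_mem_band hy (mem_band_zero x) hij rfl, mul_comm (y.1 i j)]
  exact (sub_mul _ _ _).symm

theorem lie_mem_band_one (x y : T) : ⁅x, y⁆ ∈ band n R 1 := by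
  refine mem_band_succ (mem_band_zero _) fun i j hij => ?_
  obtain rfl : i = j := Fin.ext hij
  rw [lie_apply_of_mem_band x (mem_band_zero y) hij, root, sub_self, LinearMap.zero_apply, zero_mul]

theorem diagEntry_eq_zero_of_mem_band_one {x : T} (hx : x ∈ band n R 1) (i : Fin n) :
    diagEntry R i x = 0 :=
  hx i i i.val.lt_succ_self

-- `band (k + 1)` is spanned by brackets, as `e_ij = [e_ip, e_pj]`.
theorem map_mem_band (l : T →ₗ⁅R⁆ T) (k : ℕ) {x : T} (hx : x ∈ band n R (k + 1)) :
    l x ∈ band n R (k + 1) := by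
  have map_mem_band_one {x : T} (hx : x ∈ band n R 1) : l x ∈ band n R 1 := by
    refine band_le (p := (band n R 1).comap (l : T →ₗ[R] T)) (fun i j hij h => ?_) hx
    have hji : j ≠ i := Fin.ne_of_gt (Fin.lt_def.mpr (by omega))
    rw [← lie_single_single le_rfl hij hji, Submodule.mem_comap, LieHom.coe_toLinearMap,
      LieHom.map_lie]
    exact lie_mem_band_one _ _
  induction k generalizing x with
  | zero => exact map_mem_band_one hx
  | succ k ih =>
    refine band_le (p := (band n R (k + 1 + 1)).comap (l : T →ₗ[R] T)) (fun i j hij h => ?_) hx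
    let p : Fin n := ⟨i + 1, by omega⟩
    have hip : i ≤ p := Fin.le_def.mpr (Nat.le_succ i)
    have hpj : p ≤ j := Fin.le_def.mpr (by change (i : ℕ) + 1 ≤ j; omega)
    have hji : j ≠ i := Fin.ne_of_gt (Fin.lt_def.mpr (by omega))
    rw [← lie_single_single hip hpj hji, Submodule.mem_comap, LieHom.coe_toLinearMap,
      LieHom.map_lie, add_comm (k + 1)]
    exact lie_mem_band (map_mem_band_one (single_mem_band hip le_rfl))
      (ih (single_mem_band hpj (by change (i : ℕ) + 1 + (k + 1) ≤ j; omega)))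

theorem map_mem_band_iff (l : T ≃ₗ⁅R⁆ T) (k : ℕ) {x : T} :
    l x ∈ band n R (k + 1) ↔ x ∈ band n R (k + 1) :=
  ⟨fun h => l.symm_apply_apply x ▸ map_mem_band l.symm.toLieHom k h,
    map_mem_band l.toLieHom k⟩

theorem eq_zero_of_mul_mul_eq_self {p q x : T} (h : p * x * q = x)
    (hpq : ∀ i j : Fin n, i ≤ j → diagEntry R i p * diagEntry R j q = 0) : x = 0 := by
  refine eq_zero_of_forall_mem_band fun k => ?_
  induction k with
  | zero => exact mem_band_zero x
  | succ k ih =>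
    refine mem_band_succ ih fun i j hij => ?_
    have hpx : p * x ∈ band n R k := zero_add k ▸ mul_mem_band (mem_band_zero p) ih
    have hentry : x.1 i j = diagEntry R i p * x.1 i j * diagEntry R j q := by
      conv_lhs => rw [← h, mul_apply_of_mem_band hpx (mem_band_zero q) hij rfl,
        mul_apply_of_mem_band (mem_band_zero p) ih rfl hij]
      rfl
    rw [hentry, mul_right_comm, hpq i j (Fin.le_def.mpr (by omega)), zero_mul]

theorem mul_mul_eq_mul_of_isIdempotentElem {p q : T} (hp : IsIdempotentElem p)
    (hq : IsIdempotentElem q)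
    (hpq : ∀ i j : Fin n, i ≤ j → (1 - diagEntry R i p) * diagEntry R j q = 0) (x : T) :
    p * x * q = x * q := by
  suffices (1 - p) * x * q = 0 by
    rw [sub_mul, sub_mul, one_mul] at this
    exact (sub_eq_zero.mp this).symm
  refine eq_zero_of_mul_mul_eq_self (p := 1 - p) (q := q) ?_ fun i j hij => ?_
  · rw [← mul_assoc, ← mul_assoc, hp.one_sub.eq, mul_assoc _ q q, hq.eq]
  · rw [map_sub, diagEntry_one, hpq i j hij]

variable (n R) in
/-- The diagonal idempotent `e_00 + ⋯ + e_(k-1)(k-1)`. -/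
def stair (k : ℕ) : T :=
  ⟨Matrix.diagonal fun i => if (i : ℕ) < k then 1 else 0, fun _ _ h =>
    Matrix.diagonal_apply_ne _ (ne_of_gt h)⟩

theorem diagEntry_stair (k : ℕ) (i : Fin n) :
    diagEntry R i (stair n R k) = if (i : ℕ) < k then 1 else 0 :=
  Matrix.diagonal_apply_eq (fun i : Fin n => if (i : ℕ) < k then (1 : R) else 0) i

theorem root_stair (k : ℕ) {i j : Fin n} (hij : i ≤ j) :
    root R i j (stair n R k) = if (i : ℕ) < k ∧ k ≤ j then 1 else 0 := by
  have := Fin.le_def.mp hij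
  rw [root, LinearMap.sub_apply, diagEntry_stair, diagEntry_stair]
  split_ifs <;> first | omega | simp

theorem isIdempotentElem_stair (k : ℕ) : IsIdempotentElem (stair n R k) := by
  refine Subtype.ext ((Matrix.diagonal_mul_diagonal _ _).trans ?_)
  simp only [stair, mul_ite, mul_one, mul_zero]
  grind

theorem stair_self : stair n R n = 1 := by
  refine Subtype.ext ?_
  simp [stair]

theorem stair_mul_single (k : ℕ) {i j : Fin n} (hij : i ≤ j) :
    stair n R k * single R hij = if (i : ℕ) < k then single R hij else 0 := by
  refine ext_apply fun a b => ?_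
  rw [MulMemClass.coe_mul, stair, Matrix.diagonal_mul]
  split_ifs <;>
    simp only [single, Matrix.single_apply, ZeroMemClass.coe_zero, Matrix.zero_apply] <;> grind

theorem single_mul_stair (k : ℕ) {i j : Fin n} (hij : i ≤ j) :
    single R hij * stair n R k = if (j : ℕ) < k then single R hij else 0 := by
  refine ext_apply fun a b => ?_
  rw [MulMemClass.coe_mul, stair, Matrix.mul_diagonal]
  split_ifs <;>
    simp only [single, Matrix.single_apply, ZeroMemClass.coe_zero, Matrix.zero_apply] <;> grind

theorem single_self_eq_stair_sub_stair (i : Fin n) :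
    single R (le_refl i) = stair n R (i + 1) - stair n R (i : ℕ) := by
  refine ext_apply fun a b => ?_
  simp only [single, stair, Matrix.single_apply, AddSubgroupClass.coe_sub, Matrix.sub_apply,
    Matrix.diagonal_apply]
  grind

theorem lie_stair_single (k : ℕ) {i j : Fin n} (hij : i ≤ j) :
    ⁅stair n R k, single R hij⁆ = root R i j (stair n R k) • single R hij := by
  rw [Ring.lie_def, stair_mul_single, single_mul_stair, root, LinearMap.sub_apply, diagEntry_stair,
    diagEntry_stair, sub_smul, ite_smul, ite_smul, one_smul, zero_smul]

theorem lie_stair_lie_stair (k : ℕ) (x : T) :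
    ⁅stair n R k, ⁅stair n R k, x⁆⁆ = ⁅stair n R k, x⁆ := by
  have hidem := isIdempotentElem_stair (n := n) (R := R) k
  have hcorner : stair n R k * x * stair n R k = x * stair n R k := by
    refine mul_mul_eq_mul_of_isIdempotentElem hidem hidem (fun i j hij => ?_) x
    have := Fin.le_def.mp hij
    rw [diagEntry_stair, diagEntry_stair]
    split_ifs <;> first | omega | simp
  simp only [Ring.lie_def, mul_sub, sub_mul, ← mul_assoc, hidem.eq, hcorner]
  rw [mul_assoc, hidem.eq, sub_self, sub_zero]

theorem linearMap_ext_of_stair {M : Type*} [AddCommGroup M] [Module R M] {f g : T →ₗ[R] M}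
    (hstair : ∀ k, f (stair n R k) = g (stair n R k)) (hband : ∀ x ∈ band n R 1, f x = g x) :
    f = g := by
  refine linearMap_ext fun i j hij => ?_
  rcases hij.eq_or_lt with rfl | hlt
  · rw [single_self_eq_stair_sub_stair, map_sub, map_sub, hstair, hstair]
  · exact hband _ (single_mem_band hij hlt)

theorem lie_lie_map_stair (l : T ≃ₗ⁅R⁆ T) (k : ℕ) (y : T) :
    ⁅l (stair n R k), ⁅l (stair n R k), y⁆⁆ = ⁅l (stair n R k), y⁆ := by
  obtain ⟨x, rfl⟩ := l.surjective y
  simp only [LieEquiv.coe_toLieHom, ← LieEquiv.map_lie, lie_stair_lie_stair]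

theorem isIdempotentElem_root_of_lie_lie {f : T} (hf : ∀ x : T, ⁅f, ⁅f, x⁆⁆ = ⁅f, x⁆)
    {i j : Fin n} (hij : i ≤ j) : IsIdempotentElem (root R i j f) := by
  have hd : (i : ℕ) + (j - i) = j := Nat.add_sub_cancel' hij
  have hband : single R hij ∈ band n R (j - i) := single_mem_band hij hd.le
  have hlie : ⁅f, single R hij⁆ ∈ band n R (j - i) :=
    zero_add (j - i : ℕ) ▸ lie_mem_band (mem_band_zero f) hband
  have hone : (single R hij).1 i j = 1 := Matrix.single_apply_same i j 1
  have hentry := congrArg (fun x : T => x.1 i j) (hf (single R hij))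
  simpa only [IsIdempotentElem, lie_apply_of_mem_band f hlie hd,
    lie_apply_of_mem_band f hband hd, hone, mul_one] using hentry

section Connected

variable [Nontrivial R] (hR : ∀ e : R, IsIdempotentElem e → e = 0 ∨ e = 1)
include hR

-- The bracket with `stair k` scales `e_ij`, hence the bracket with `l (stair k)` scales `l e_ij`;
-- compare a nonzero entry of `l e_ij` on its lowest superdiagonal.
theorem exists_root_map_stair_eq (l : T ≃ₗ⁅R⁆ T) {d : ℕ} {i j : Fin n}
    (hij : (i : ℕ) + (d + 1) = j) :
    ∃ a b : Fin n, (a : ℕ) + (d + 1) = b ∧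
      ∀ k, root R a b (l (stair n R k)) = root R i j (stair n R k) := by
  have hle : i ≤ j := Fin.le_def.mpr (by omega)
  have hband : l (single R hle) ∈ band n R (d + 1) :=
    (map_mem_band_iff l d).mpr (single_mem_band hle hij.le)
  obtain ⟨a, b, hab, hne⟩ : ∃ a b : Fin n,
      (a : ℕ) + (d + 1) = b ∧ (l (single R hle)).1 a b ≠ 0 := by
    by_contra! hzero
    exact single_notMem_band hle (by omega)
      ((map_mem_band_iff l (d + 1)).mp (mem_band_succ hband hzero))
  refine ⟨a, b, hab, fun k => ?_⟩
  have hscale : root R a b (l (stair n R k)) * (l (single R hle)).1 a b =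
      root R i j (stair n R k) * (l (single R hle)).1 a b := by
    rw [← lie_apply_of_mem_band _ hband hab, ← LieEquiv.map_lie, lie_stair_single, map_smul]
    rfl
  have hleft := hR _ (isIdempotentElem_root_of_lie_lie (lie_lie_map_stair l k)
    (Fin.le_def.mpr (by omega) : a ≤ b))
  have hright := hR _ (isIdempotentElem_root_of_lie_lie (lie_stair_lie_stair k) hle)
  rcases hleft with hl | hl <;> rcases hright with hr | hr <;> simp_all

theorem exists_root_comp_eq (l : T ≃ₗ⁅R⁆ T) {d : ℕ} {i j : Fin n} (hij : (i : ℕ) + (d + 1) = j) :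
    ∃ a b : Fin n, (a : ℕ) + (d + 1) = b ∧ root R a b ∘ₗ (l : T →ₗ[R] T) = root R i j := by
  obtain ⟨a, b, hab, hstair⟩ := exists_root_map_stair_eq hR l hij
  refine ⟨a, b, hab, linearMap_ext_of_stair hstair fun x hx => ?_⟩
  have hlx : l x ∈ band n R 1 := (map_mem_band_iff l 0).mpr hx
  simp only [root, LinearMap.comp_apply, LinearMap.sub_apply]
  rw [diagEntry_eq_zero_of_mem_band_one hx, diagEntry_eq_zero_of_mem_band_one hx]
  exact congrArg₂ (· - ·) (diagEntry_eq_zero_of_mem_band_one hlx a)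
    (diagEntry_eq_zero_of_mem_band_one hlx b)

end Connected

variable (R) in
/-- The simple root `x ↦ x_ii - x_(i+1)(i+1)` of the algebra of matrices of size `n + 1`. -/
def simpleRoot (i : Fin n) : upperTriangularAlgebra (n + 1) R →ₗ[R] R :=
  root R i.castSucc i.succ

theorem simpleRoot_stair (i : Fin n) (k : ℕ) :
    simpleRoot R i (stair (n + 1) R k) = if (i : ℕ) + 1 = k then 1 else 0 := by
  rw [simpleRoot, root_stair k i.castSucc_lt_succ.le, Fin.val_castSucc, Fin.val_succ]
  exact if_congr (by omega) rfl rfl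

theorem simpleRoot_injective [Nontrivial R] :
    Function.Injective (simpleRoot R : Fin n → upperTriangularAlgebra (n + 1) R →ₗ[R] R) := by
  intro i j hij
  have heval := LinearMap.congr_fun hij (stair (n + 1) R (i + 1))
  simp only [simpleRoot_stair, if_pos] at heval
  by_contra hne
  rw [if_neg (by omega)] at heval
  exact one_ne_zero heval

theorem root_castSucc_succ_eq_add {i j : Fin n} (hij : (i : ℕ) + 1 = j) :
    root R i.castSucc j.succ = simpleRoot R i + simpleRoot R j := by
  have : i.succ = j.castSucc := Fin.ext hij
  rw [simpleRoot, simpleRoot, root, root, root, this, sub_add_sub_cancel]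

theorem eq_or_eq_of_simpleRoot_add_eq [Nontrivial R] {a b p q : Fin n} (hab : a ≠ b)
    (h : simpleRoot R a + simpleRoot R b = simpleRoot R p + simpleRoot R q) : a = p ∨ a = q := by
  have heval := LinearMap.congr_fun h (stair (n + 1) R (a + 1))
  simp only [LinearMap.add_apply, simpleRoot_stair] at heval
  by_contra! hne
  rw [if_pos trivial, if_neg (by omega), if_neg (by omega), if_neg (by omega)] at heval
  simp at heval

theorem exists_sub_eq_mul_sub_of_injective {f : Fin n → Fin n} (hinj : Function.Injective f)
    (hadj : ∀ i j : Fin n, (i : ℕ) + 1 = j → (f i : ℕ) + 1 = f j ∨ (f j : ℕ) + 1 = f i) :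
    ∃ d : ℤ, (d = 1 ∨ d = -1) ∧ ∀ i j : Fin n, (f j : ℤ) - f i = d * (j - i) := by
  by_cases hn : n ≤ 1
  · have : Subsingleton (Fin n) := Fin.subsingleton_iff_le_one.mpr hn
    exact ⟨1, Or.inl rfl, fun i j => by rw [Subsingleton.elim i j, sub_self, sub_self, mul_zero]⟩
  let g (i : ℕ) (hi : i < n) : ℤ := (f ⟨i, hi⟩ : ℕ)
  have hstep (i : ℕ) (hi : i + 1 < n) : g (i + 1) hi - g i (by omega) = 1 ∨
      g (i + 1) hi - g i (by omega) = -1 := by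
    have := hadj ⟨i, by omega⟩ ⟨i + 1, hi⟩ rfl
    simp only [g]
    omega
  -- By injectivity two consecutive steps cannot cancel.
  have hconst (i : ℕ) (hi : i + 1 < n) :
      g (i + 1) hi - g i (by omega) = g 1 (by omega) - g 0 (by omega) := by
    induction i with
    | zero => rfl
    | succ i ih =>
      have hne : g (i + 1 + 1) hi ≠ g i (by omega) := fun h => by
        have : i + 1 + 1 = i := Fin.val_eq_of_eq (hinj (Fin.ext (Int.ofNat.inj h)))
        omega
      have := ih (by omega)
      have := hstep i (by omega)
      have := hstep (i + 1) hi
      omega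
  have hlinear (i : ℕ) (hi : i < n) :
      g i hi = g 0 (by omega) + (g 1 (by omega) - g 0 (by omega)) * i := by
    induction i with
    | zero => simp
    | succ i ih =>
      have := hconst i hi
      have := ih (by omega)
      push_cast
      linarith
  refine ⟨_, hstep 0 (by omega), fun i j => ?_⟩
  linear_combination hlinear j j.2 - hlinear i i.2

theorem eq_id_or_eq_rev_of_injective {f : Fin n → Fin n} (hinj : Function.Injective f)
    (hadj : ∀ i j : Fin n, (i : ℕ) + 1 = j → (f i : ℕ) + 1 = f j ∨ (f j : ℕ) + 1 = f i) :
    f = id ∨ f = Fin.rev := by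
  obtain ⟨d, rfl | rfl, hd⟩ := exists_sub_eq_mul_sub_of_injective hinj hadj
  · refine Or.inl (funext fun i => Fin.ext ?_)
    have hfirst := hd ⟨0, i.pos⟩ i
    have hlast := hd i ⟨n - 1, by omega⟩
    simp only [id] at *
    omega
  · refine Or.inr (funext fun i => Fin.ext ?_)
    have hfirst := hd ⟨0, i.pos⟩ i
    have hlast := hd i ⟨n - 1, by omega⟩
    simp only [Fin.val_rev] at *
    omega

theorem simpleRoot_comp_eq_or_rev [Nontrivial R] (hR : ∀ e : R, IsIdempotentElem e → e = 0 ∨ e = 1)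
    (l : upperTriangularAlgebra (n + 1) R ≃ₗ⁅R⁆ upperTriangularAlgebra (n + 1) R) :
    (∀ i x, simpleRoot R i (l x) = simpleRoot R i x) ∨
      ∀ i x, simpleRoot R i.rev (l x) = simpleRoot R i x := by
  have hsimple (i : Fin n) : ∃ a : Fin n, ∀ x, simpleRoot R a (l x) = simpleRoot R i x := by
    obtain ⟨a, b, hab, h⟩ :=
      exists_root_comp_eq hR l (d := 0) (i := i.castSucc) (j := i.succ) rfl
    obtain ⟨p, rfl, rfl⟩ : ∃ p : Fin n, p.castSucc = a ∧ p.succ = b :=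
      ⟨⟨a, by omega⟩, rfl, Fin.ext hab⟩
    exact ⟨p, LinearMap.congr_fun h⟩
  choose f hf using hsimple
  have hinj : Function.Injective f := fun i j hij =>
    simpleRoot_injective (LinearMap.ext fun x => by rw [← hf i, ← hf j, hij])
  have hadj (i j : Fin n) (hij : (i : ℕ) + 1 = j) :
      (f i : ℕ) + 1 = f j ∨ (f j : ℕ) + 1 = f i := by
    obtain ⟨a, b, hab, h⟩ := exists_root_comp_eq hR l (d := 1) (i := i.castSucc) (j := j.succ)
      (by rw [Fin.val_castSucc, Fin.val_succ, ← hij])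
    obtain ⟨p, q, hpq, rfl, rfl⟩ :
        ∃ p q : Fin n, (p : ℕ) + 1 = q ∧ p.castSucc = a ∧ q.succ = b :=
      ⟨⟨a, by omega⟩, ⟨a + 1, by omega⟩, rfl, rfl, Fin.ext hab⟩
    have hsum : simpleRoot R (f i) + simpleRoot R (f j) = simpleRoot R p + simpleRoot R q := by
      rw [root_castSucc_succ_eq_add hpq, root_castSucc_succ_eq_add hij] at h
      refine LinearMap.ext fun y => ?_
      obtain ⟨x, rfl⟩ := l.surjective y
      exact (congrArg₂ (· + ·) (hf i x) (hf j x)).trans (LinearMap.congr_fun h x).symm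
    have hne : f i ≠ f j := hinj.ne (Fin.ne_of_val_ne (by omega))
    have hi := eq_or_eq_of_simpleRoot_add_eq hne hsum
    have hj := eq_or_eq_of_simpleRoot_add_eq hne.symm (add_comm (simpleRoot R (f i)) _ ▸ hsum)
    grind
  refine (eq_id_or_eq_rev_of_injective hinj hadj).imp ?_ ?_ <;> rintro rfl <;> exact hf

theorem exists_diagEntry_eq_add {l : upperTriangularAlgebra (n + 1) R →ₗ[R]
    upperTriangularAlgebra (n + 1) R} (hl : ∀ i x, simpleRoot R i (l x) = simpleRoot R i x) :
    ∃ c : upperTriangularAlgebra (n + 1) R →ₗ[R] R,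
      ∀ i x, diagEntry R i (l x) = diagEntry R i x + c x := by
  refine ⟨diagEntry R 0 ∘ₗ l - diagEntry R 0, fun i x => ?_⟩
  induction i using Fin.induction with
  | zero => simp
  | succ i ih =>
    have := hl i x
    simp only [simpleRoot, root, LinearMap.sub_apply] at this
    linear_combination ih - this

variable (n R) in
/-- The reflection of a matrix in its antidiagonal, an anti-automorphism of the algebra. -/
def antitranspose : T ≃ₗ[R] T where
  toFun x := ⟨fun i j => x.1 j.rev i.rev, fun _ _ h =>
    apply_eq_zero_of_lt x (Fin.rev_lt_rev.mpr h)⟩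
  invFun x := ⟨fun i j => x.1 j.rev i.rev, fun _ _ h =>
    apply_eq_zero_of_lt x (Fin.rev_lt_rev.mpr h)⟩
  map_add' _ _ := rfl
  map_smul' _ _ := rfl
  left_inv x := ext_apply fun i j => by simp
  right_inv x := ext_apply fun i j => by simp

theorem antitranspose_apply (x : T) (i j : Fin n) :
    (antitranspose n R x).1 i j = x.1 j.rev i.rev :=
  rfl

theorem antitranspose_mul (x y : T) :
    antitranspose n R (x * y) = antitranspose n R y * antitranspose n R x := by
  refine ext_apply fun i j => ?_
  rw [antitranspose_apply, MulMemClass.coe_mul, MulMemClass.coe_mul, Matrix.mul_apply,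
    Matrix.mul_apply, ← Equiv.sum_comp Fin.revPerm]
  simp only [antitranspose_apply, Fin.revPerm_apply, mul_comm]

theorem neg_antitranspose_mul (x y : T) :
    -antitranspose n R (x * y) = -(-antitranspose n R y * -antitranspose n R x) := by
  rw [antitranspose_mul]
  exact congrArg Neg.neg (neg_mul_neg (α := T) _ _).symm

theorem antitranspose_one : antitranspose n R 1 = 1 := by
  refine ext_apply fun i j => ?_
  rw [antitranspose_apply, OneMemClass.coe_one]
  simp only [Matrix.one_apply, Fin.rev_inj, eq_comm]

variable (n R) in
/-- The negative of `antitranspose`: the exceptional Lie automorphism, which reverses the order of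
the simple roots. -/
def negAntitranspose : T ≃ₗ⁅R⁆ T where
  __ := (antitranspose n R).trans (LinearEquiv.neg R)
  map_lie' {x y} := by
    change -antitranspose n R ⁅x, y⁆ = ⁅-antitranspose n R x, -antitranspose n R y⁆
    rw [Ring.lie_def, map_sub, antitranspose_mul, antitranspose_mul, neg_sub, Ring.lie_def]
    exact congrArg₂ (· - ·) (neg_mul_neg (α := T) _ _).symm (neg_mul_neg (α := T) _ _).symm

theorem negAntitranspose_apply (x : T) : negAntitranspose n R x = -antitranspose n R x :=
  rfl

theorem negAntitranspose_negAntitranspose (x : T) :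
    negAntitranspose n R (negAntitranspose n R x) = x := by
  rw [negAntitranspose_apply, negAntitranspose_apply, map_neg, neg_neg]
  exact (antitranspose n R).symm_apply_apply x

theorem negAntitranspose_algebraMap (r : R) :
    negAntitranspose n R (algebraMap R T r) = -algebraMap R T r := by
  rw [negAntitranspose_apply, Algebra.algebraMap_eq_smul_one, map_smul, antitranspose_one]

theorem simpleRoot_negAntitranspose (i : Fin n) (x : upperTriangularAlgebra (n + 1) R) :
    simpleRoot R i (negAntitranspose (n + 1) R x) = simpleRoot R i.rev x := by
  have hentry (j : Fin (n + 1)) :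
      diagEntry R j (negAntitranspose (n + 1) R x) = -diagEntry R j.rev x :=
    rfl
  simp only [simpleRoot, root, LinearMap.sub_apply, hentry, Fin.rev_castSucc, Fin.rev_succ]
  ring

section SubScalar

variable {A B : Type*} [Ring A] [Algebra R A] [Ring B] [Algebra R B]

/-- A Lie homomorphism corrected by a linear map into the scalars that kills brackets. -/
def subScalar (l : A →ₗ⁅R⁆ B) (c : A →ₗ[R] R) (hc : ∀ x y : A, c ⁅x, y⁆ = 0) : A →ₗ⁅R⁆ B where
  toLinearMap := (l : A →ₗ[R] B) - Algebra.linearMap R B ∘ₗ c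
  map_lie' {x y} := by
    change l ⁅x, y⁆ - algebraMap R B (c ⁅x, y⁆) =
      ⁅l x - algebraMap R B (c x), l y - algebraMap R B (c y)⁆
    rw [hc, map_zero, sub_zero, LieHom.map_lie, sub_lie, lie_sub,
      (Algebra.commute_algebraMap_right (c y) (l x)).lie_eq,
      (Algebra.commute_algebraMap_left (c x) (l y - algebraMap R B (c y))).lie_eq, sub_zero,
      sub_zero]

variable (l : A →ₗ⁅R⁆ B) (c : A →ₗ[R] R) (hc : ∀ x y : A, c ⁅x, y⁆ = 0) (x : A)

theorem subScalar_apply : subScalar l c hc x = l x - algebraMap R B (c x) :=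
  rfl

theorem subScalar_lie (y : B) : ⁅subScalar l c hc x, y⁆ = ⁅l x, y⁆ := by
  rw [subScalar_apply, sub_lie, (Algebra.commute_algebraMap_left (c x) y).lie_eq, sub_zero]

end SubScalar

theorem mul_single_one_mul_apply {ι κ μ ν S : Type*} [Fintype κ] [DecidableEq κ] [Fintype μ]
    [DecidableEq μ] [Semiring S] (a : Matrix ι κ S) (b : Matrix μ ν S) (i : ι) (p : κ) (q : μ)
    (j : ν) : (a * Matrix.single p q (1 : S) * b : Matrix ι ν S) i j = a i p * b q j := by
  rw [Matrix.single_eq_single_vecMulVec_single, Matrix.mul_vecMulVec, Matrix.vecMulVec_mul]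
  simp [Matrix.vecMulVec_apply]

theorem isIdempotentElem_of_lie_lie {f : T} (hf : ∀ x : T, ⁅f, ⁅f, x⁆⁆ = ⁅f, x⁆)
    (hdiag : ∀ i, IsIdempotentElem (diagEntry R i f))
    (hlt : ∀ i j : Fin n, i < j → diagEntry R i f = 1 ∨ diagEntry R j f = 0) :
    IsIdempotentElem f := by
  have hentry (p i j : Fin n) := congrArg (fun x : T => x.1 i j) (hf (single R (le_refl p)))
  simp only [Ring.lie_def, AddSubgroupClass.coe_sub, MulMemClass.coe_mul, single, mul_sub, sub_mul,
    Matrix.sub_apply, ← Matrix.mul_assoc, mul_single_one_mul_apply] at hentry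
  refine ext_apply fun i j => ?_
  rcases lt_trichotomy i j with hij | rfl | hji
  · rw [MulMemClass.coe_mul]
    rcases hlt i j hij with hi | hj
    · have hi : f.1 i i = 1 := hi
      have h := hentry i i j
      rw [Matrix.mul_assoc _ f.1 f.1, Matrix.mul_single_apply_of_ne _ _ _ _ _ hij.ne',
        Matrix.mul_single_apply_of_ne _ _ _ _ _ hij.ne', Matrix.single_mul_apply_same,
        Matrix.single_mul_apply_same, hi] at h
      linear_combination h
    · have hj : f.1 j j = 0 := hj
      have h := hentry j i j
      rw [Matrix.mul_assoc _ f.1 f.1, Matrix.single_mul_apply_of_ne _ _ _ _ _ hij.ne,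
        Matrix.single_mul_apply_of_ne _ _ _ _ _ hij.ne, Matrix.mul_single_apply_same,
        Matrix.mul_single_apply_same, hj] at h
      linear_combination h
  · exact (diagEntry_mul i f f).trans (hdiag i)
  · rw [apply_eq_zero_of_lt _ hji, apply_eq_zero_of_lt _ hji]

theorem mul_eq_self_and_mul_eq_zero_of_lie_eq_self {A : Type*} [Ring A] {f y : A}
    (hf : IsIdempotentElem f) (hcorner : f * y * f = y * f) (h : ⁅f, y⁆ = y) :
    f * y = y ∧ y * f = 0 := by
  rw [Ring.lie_def] at h
  have hyf : y * f = 0 := by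
    rw [← congrArg (· * f) h, sub_mul, mul_assoc y, hf.eq, hcorner, sub_self]
  exact ⟨by simpa only [hyf, sub_zero] using h, hyf⟩

section DiagonalPreserving

variable {m : upperTriangularAlgebra n R →ₗ⁅R⁆ upperTriangularAlgebra n R}
  (hdiag : ∀ i x, diagEntry R i (m x) = diagEntry R i x)
  (hidem : ∀ k, IsIdempotentElem (m (stair n R k)))

theorem map_lie_stair_single (m : T →ₗ⁅R⁆ T) (k : ℕ) {i j : Fin n} (hij : i ≤ j) :
    ⁅m (stair n R k), m (single R hij)⁆ =
      if (i : ℕ) < k ∧ k ≤ j then m (single R hij) else 0 := by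
  rw [← LieHom.map_lie, lie_stair_single, root_stair k hij, ite_smul, one_smul, zero_smul,
    apply_ite m, map_zero]

include hdiag hidem

theorem map_stair_mul_mul_map_stair {a b : ℕ} (hab : a ≤ b) (x : T) :
    m (stair n R b) * x * m (stair n R a) = x * m (stair n R a) := by
  refine mul_mul_eq_mul_of_isIdempotentElem (hidem b) (hidem a) (fun i j hij => ?_) x
  have := Fin.le_def.mp hij
  rw [hdiag, hdiag, diagEntry_stair, diagEntry_stair]
  split_ifs <;> first | omega | simp

theorem map_stair_mul_map_stair {a b : ℕ} (hab : a ≤ b) :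
    m (stair n R b) * m (stair n R a) = m (stair n R a) := by
  simpa only [mul_one, one_mul] using map_stair_mul_mul_map_stair hdiag hidem hab 1

theorem map_stair_mul_map_single_of_lt {k : ℕ} {i j : Fin n} (hij : i ≤ j) (hik : (i : ℕ) < k) :
    m (stair n R k) * m (single R hij) = m (single R hij) := by
  rcases hij.eq_or_lt with rfl | hlt
  · rw [single_self_eq_stair_sub_stair, map_sub, mul_sub,
      map_stair_mul_map_stair hdiag hidem hik, map_stair_mul_map_stair hdiag hidem hik.le]
  · have hlie := map_lie_stair_single m (i + 1) hij
    rw [if_pos ⟨Nat.lt_succ_self i, hlt⟩] at hlie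
    have hsucc := (mul_eq_self_and_mul_eq_zero_of_lie_eq_self (hidem (i + 1))
      (map_stair_mul_mul_map_stair hdiag hidem le_rfl _) hlie).1
    rw [← hsucc, ← mul_assoc, map_stair_mul_map_stair hdiag hidem hik]

theorem map_single_mul_map_stair_of_le {k : ℕ} {i j : Fin n} (hij : i ≤ j) (hkj : k ≤ j) :
    m (single R hij) * m (stair n R k) = 0 := by
  rcases hij.eq_or_lt with rfl | hlt
  · rw [single_self_eq_stair_sub_stair, map_sub, sub_mul, map_stair_mul_map_stair hdiag hidem hkj,
      map_stair_mul_map_stair hdiag hidem (hkj.trans (Nat.le_succ _)), sub_self]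
  · have hlie := map_lie_stair_single m j hij
    rw [if_pos ⟨hlt, le_rfl⟩] at hlie
    have hself := (mul_eq_self_and_mul_eq_zero_of_lie_eq_self (hidem j)
      (map_stair_mul_mul_map_stair hdiag hidem le_rfl _) hlie).2
    rw [← map_stair_mul_map_stair hdiag hidem hkj, ← mul_assoc, hself, zero_mul]

theorem map_stair_mul_map_single_of_le {k : ℕ} {i j : Fin n} (hij : i ≤ j) (hki : k ≤ i) :
    m (stair n R k) * m (single R hij) = 0 := by
  have hlie := map_lie_stair_single m k hij
  rw [if_neg (by omega), Ring.lie_def,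
    map_single_mul_map_stair_of_le hdiag hidem hij (hki.trans hij), sub_zero] at hlie
  exact hlie

theorem map_single_mul_map_stair_of_lt {k : ℕ} {i j : Fin n} (hij : i ≤ j) (hjk : (j : ℕ) < k) :
    m (single R hij) * m (stair n R k) = m (single R hij) := by
  have hlie := map_lie_stair_single m k hij
  rw [if_neg (by omega), Ring.lie_def,
    map_stair_mul_map_single_of_lt hdiag hidem hij (hjk.trans_le' hij), sub_eq_zero] at hlie
  exact hlie.symm

theorem map_single_mul_map_single_of_ne {i j k l : Fin n} (hij : i ≤ j) (hkl : k ≤ l)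
    (hjk : j ≠ k) : m (single R hij) * m (single R hkl) = 0 := by
  rcases hjk.lt_or_gt with hlt | hgt
  · rw [← map_single_mul_map_stair_of_lt hdiag hidem hij hlt, mul_assoc,
      map_stair_mul_map_single_of_le hdiag hidem hkl le_rfl, mul_zero]
  · rw [← map_stair_mul_map_single_of_lt hdiag hidem hkl hgt, ← mul_assoc,
      map_single_mul_map_stair_of_le hdiag hidem hij le_rfl, zero_mul]

theorem map_single_mul_map_single {i j k : Fin n} (hij : i ≤ j) (hjk : j ≤ k) :
    m (single R hij) * m (single R hjk) = m (single R (hij.trans hjk)) := by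
  by_cases hki : k = i
  · obtain rfl : i = j := hij.antisymm (hki ▸ hjk)
    subst hki
    nth_rewrite 1 [single_self_eq_stair_sub_stair]
    rw [map_sub, sub_mul, map_stair_mul_map_single_of_lt hdiag hidem _ (Nat.lt_succ_self _),
      map_stair_mul_map_single_of_le hdiag hidem _ le_rfl, sub_zero]
  · rw [← lie_single_single hij hjk hki, LieHom.map_lie, Ring.lie_def,
      map_single_mul_map_single_of_ne hdiag hidem hjk hij hki, sub_zero]

theorem map_mul_of_diagEntry_map (x y : T) : m (x * y) = m x * m y := by
  suffices (LinearMap.mul R T).compr₂ (m : T →ₗ[R] T) =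
      (LinearMap.mul R T).compl₁₂ (m : T →ₗ[R] T) (m : T →ₗ[R] T) from LinearMap.congr_fun₂ this x y
  refine linearMap_ext fun i j hij => linearMap_ext fun k l hkl => ?_
  change m (single R hij * single R hkl) = m (single R hij) * m (single R hkl)
  by_cases hjk : j = k
  · subst hjk
    rw [single_mul_single, map_single_mul_map_single hdiag hidem]
  · rw [single_mul_single_of_ne _ _ hjk, map_zero,
      map_single_mul_map_single_of_ne hdiag hidem _ _ hjk]

theorem map_one_of_diagEntry_map : m 1 = 1 := by
  have hone : IsIdempotentElem (m 1) := stair_self (n := n) (R := R) ▸ hidem n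
  have hunit := mul_mul_eq_mul_of_isIdempotentElem hone IsIdempotentElem.one
    (fun i j _ => by rw [hdiag, diagEntry_one, sub_self, zero_mul]) 1
  simpa only [mul_one] using hunit

end DiagonalPreserving

section ShiftedDiagonal

variable {l : upperTriangularAlgebra n R ≃ₗ⁅R⁆ upperTriangularAlgebra n R}
  {c : upperTriangularAlgebra n R →ₗ[R] R} (hl : ∀ i x, diagEntry R i (l x) = diagEntry R i x + c x)
include hl

theorem shift_eq_zero_of_mem_band_one {x : T} (hx : x ∈ band n R 1) : c x = 0 := by
  rcases n.eq_zero_or_pos with rfl | hn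
  · rw [ext_apply (x := x) (y := 0) fun i => i.elim0, map_zero]
  · have h := hl ⟨0, hn⟩ x
    rwa [diagEntry_eq_zero_of_mem_band_one hx, zero_add,
      diagEntry_eq_zero_of_mem_band_one ((map_mem_band_iff l 0).mpr hx), eq_comm] at h

theorem shift_lie (x y : T) : c ⁅x, y⁆ = 0 :=
  shift_eq_zero_of_mem_band_one hl (lie_mem_band_one x y)

theorem diagEntry_subScalar (i : Fin n) (x : T) :
    diagEntry R i (subScalar l.toLieHom c (shift_lie hl) x) = diagEntry R i x := by
  rw [subScalar_apply, map_sub, Algebra.algebraMap_eq_smul_one, map_smul, diagEntry_one,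
    smul_eq_mul, mul_one, sub_eq_iff_eq_add]
  exact hl i x

theorem isIdempotentElem_subScalar_stair (k : ℕ) :
    IsIdempotentElem (subScalar l.toLieHom c (shift_lie hl) (stair n R k)) := by
  refine isIdempotentElem_of_lie_lie (fun x => ?_) (fun i => ?_) fun i j hij => ?_
  · simp only [subScalar_lie]
    exact lie_lie_map_stair l k x
  · rw [diagEntry_subScalar hl, diagEntry_stair]
    split_ifs
    exacts [IsIdempotentElem.one, IsIdempotentElem.zero]
  · have := Fin.lt_def.mp hij
    rw [diagEntry_subScalar hl, diagEntry_subScalar hl, diagEntry_stair, diagEntry_stair]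
    grind

theorem subScalar_bijective :
    Function.Bijective (subScalar l.toLieHom c (shift_lie hl)) := by
  refine ⟨(injective_iff_map_eq_zero _).mpr fun x hx => ?_, fun y => ?_⟩
  · have hband : x ∈ band n R 1 := mem_band_succ (mem_band_zero x) fun i j hij => by
      obtain rfl : i = j := Fin.ext hij
      have hentry := diagEntry_subScalar hl i x
      rw [hx, map_zero] at hentry
      exact hentry.symm
    rw [subScalar_apply, shift_eq_zero_of_mem_band_one hl hband, map_zero, sub_zero] at hx
    exact l.injective (hx.trans (map_zero l).symm)
  · obtain ⟨x, rfl⟩ := l.surjective y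
    refine ⟨x + c x • 1, ?_⟩
    rw [map_add, map_smul, map_one_of_diagEntry_map (diagEntry_subScalar hl)
      (isIdempotentElem_subScalar_stair hl), subScalar_apply, ← Algebra.algebraMap_eq_smul_one,
      sub_add_cancel]

theorem exists_algEquiv_add_algebraMap :
    ∃ e : T ≃ₐ[R] T, ∀ x, l x = e x + algebraMap R T (c x) := by
  let e : T ≃ₐ[R] T := AlgEquiv.ofBijective
    (AlgHom.ofLinearMap (subScalar l.toLieHom c (shift_lie hl) : T →ₗ[R] T)
      (map_one_of_diagEntry_map (diagEntry_subScalar hl) (isIdempotentElem_subScalar_stair hl))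
      (map_mul_of_diagEntry_map (diagEntry_subScalar hl) (isIdempotentElem_subScalar_stair hl)))
    (subScalar_bijective hl)
  exact ⟨e, fun x => (sub_add_cancel (l x) (algebraMap R T (c x))).symm⟩

end ShiftedDiagonal

theorem exists_diagEntry_map_eq_add_or [Nontrivial R]
    (hR : ∀ e : R, IsIdempotentElem e → e = 0 ∨ e = 1) (l : T ≃ₗ⁅R⁆ T) :
    ∃ c : T →ₗ[R] R, (∀ i x, diagEntry R i (l x) = diagEntry R i x + c x) ∨
      ∀ i x, diagEntry R i (negAntitranspose n R (l x)) = diagEntry R i x + c x := by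
  cases n with
  | zero => exact ⟨0, Or.inl fun i => i.elim0⟩
  | succ n =>
    rcases simpleRoot_comp_eq_or_rev hR l with hid | hrev
    · obtain ⟨c, hc⟩ := exists_diagEntry_eq_add (l := l.toLieHom.toLinearMap) hid
      exact ⟨c, Or.inl hc⟩
    · obtain ⟨c, hc⟩ := exists_diagEntry_eq_add
        (l := (l.trans (negAntitranspose (n + 1) R)).toLieHom.toLinearMap)
        fun i x => (simpleRoot_negAntitranspose i (l x)).trans (hrev i x)
      exact ⟨c, Or.inr hc⟩

theorem exists_eq_algEquiv_add_or_eq_neg_antitranspose_add [Nontrivial R]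
    (hR : ∀ e : R, IsIdempotentElem e → e = 0 ∨ e = 1) (l : T ≃ₗ[R] T)
    (hLie : ∀ x y : T, l ⁅x, y⁆ = ⁅l x, l y⁆) :
    ∃ (e : T ≃ₐ[R] T) (c : T →ₗ[R] R), (∀ x y : T, c ⁅x, y⁆ = 0) ∧
      ((∀ x, l x = e x + algebraMap R T (c x)) ∨
        ∀ x, l x = -antitranspose n R (e x) + algebraMap R T (c x)) := by
  let lieEquiv : T ≃ₗ⁅R⁆ T := { l with map_lie' := hLie _ _ }
  obtain ⟨c, hid | hrev⟩ := exists_diagEntry_map_eq_add_or hR lieEquiv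
  · obtain ⟨e, he⟩ := exists_algEquiv_add_algebraMap hid
    exact ⟨e, c, shift_lie hid, Or.inl he⟩
  · have hflip (i : Fin n) (x : T) :
        diagEntry R i (lieEquiv.trans (negAntitranspose n R) x) = diagEntry R i x + c x :=
      hrev i x
    obtain ⟨e, he⟩ := exists_algEquiv_add_algebraMap hflip
    refine ⟨e, -c, fun x y => neg_eq_zero.mpr (shift_lie hflip x y), Or.inr fun x => ?_⟩
    calc
      l x = negAntitranspose n R (negAntitranspose n R (l x)) :=
        (negAntitranspose_negAntitranspose _).symm
      _ = negAntitranspose n R (e x + algebraMap R T (c x)) := congrArg _ (he x)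
      _ = -antitranspose n R (e x) + algebraMap R T ((-c) x) := by
        rw [map_add, negAntitranspose_algebraMap, negAntitranspose_apply, LinearMap.neg_apply,
          map_neg]

end upperTriangularAlgebra

open upperTriangularAlgebra in
theorem stmt16_general (n : ℕ) (R : Type*) [CommRing R] [Nontrivial R]
    (hR : ∀ e : R, IsIdempotentElem e → e = 0 ∨ e = 1)
    (l : upperTriangularAlgebra n R ≃ₗ[R] upperTriangularAlgebra n R)
    (hLie : ∀ x y : upperTriangularAlgebra n R,
      l (x * y - y * x) = l x * l y - l y * l x) :
    ∃ m n₀ : upperTriangularAlgebra n R →ₗ[R] upperTriangularAlgebra n R,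
      (∀ x : upperTriangularAlgebra n R, l x = m x + n₀ x) ∧
      Function.Bijective m ∧
      ((∀ x y : upperTriangularAlgebra n R, m (x * y) = m x * m y) ∨
        (∀ x y : upperTriangularAlgebra n R, m (x * y) = -(m y * m x))) ∧
      (∀ x : upperTriangularAlgebra n R,
        ∃ r : R, n₀ x = algebraMap R (upperTriangularAlgebra n R) r) ∧
      (∀ x y : upperTriangularAlgebra n R, n₀ (x * y - y * x) = 0) := by
  obtain ⟨e, c, hc, hl⟩ := exists_eq_algEquiv_add_or_eq_neg_antitranspose_add hR l hLie
  let n₀ : upperTriangularAlgebra n R →ₗ[R] upperTriangularAlgebra n R :=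
    Algebra.linearMap R _ ∘ₗ c
  have hn₀ (x y : upperTriangularAlgebra n R) : n₀ (x * y - y * x) = 0 :=
    (congrArg (algebraMap R _) (hc x y)).trans (map_zero _)
  rcases hl with hl | hl
  · exact ⟨e.toLinearMap, n₀, hl, e.bijective, Or.inl (map_mul e), fun x => ⟨c x, rfl⟩, hn₀⟩
  · let m := (e.toLinearEquiv.trans (antitranspose n R)).trans (LinearEquiv.neg R)
    have hm (x y : upperTriangularAlgebra n R) : m (x * y) = -(m y * m x) :=
      (congrArg (fun z => -antitranspose n R z) (map_mul e x y)).trans (neg_antitranspose_mul _ _)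
    exact ⟨m, n₀, hl, m.bijective, Or.inr hm, fun x => ⟨c x, rfl⟩, hn₀⟩

/-- **Corollary 4.5 (Benkovič–Eremita).**  Let `n ≥ 2` and let `R` be a commutative
domain with `1/2 ∈ R`.  If `l : T_n(R) → T_n(R)` is a Lie isomorphism of the algebra
of `n × n` upper triangular matrices over `R`, then `l = m + n₀`, where `m` is an
algebra isomorphism or the negative of an algebra anti-isomorphism and
`n₀ : T_n(R) → R·1` is a linear map vanishing on each commutator. -/
theorem stmt16 (n : ℕ) (hn : 2 ≤ n) (R : Type*) [CommRing R] [IsDomain R]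
    [Invertible (2 : R)]
    (l : upperTriangularAlgebra n R ≃ₗ[R] upperTriangularAlgebra n R)
    (hLie : ∀ x y : upperTriangularAlgebra n R,
      l (x * y - y * x) = l x * l y - l y * l x) :
    ∃ m n₀ : upperTriangularAlgebra n R →ₗ[R] upperTriangularAlgebra n R,
      (∀ x : upperTriangularAlgebra n R, l x = m x + n₀ x) ∧
      Function.Bijective m ∧
      ((∀ x y : upperTriangularAlgebra n R, m (x * y) = m x * m y) ∨
        (∀ x y : upperTriangularAlgebra n R, m (x * y) = -(m y * m x))) ∧
      (∀ x : upperTriangularAlgebra n R,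
        ∃ r : R, n₀ x = algebraMap R (upperTriangularAlgebra n R) r) ∧
      (∀ x y : upperTriangularAlgebra n R, n₀ (x * y - y * x) = 0) :=
  stmt16_general n R (fun _ he => IsIdempotentElem.iff_eq_zero_or_one.mp he) l hLie
end

section
/- Let n ≥ 3 and let R be a commutative domain with 1/2 ∈ R. If l : M_n(R) → M_n(R) is a Lie isomorphism of the full algebra of n×n matrices over R, then l = m + n₀, where m : M_n(R) → M_n(R) is an algebra isomorphism or the negative of an algebra anti-isomorphism, and n₀ : M_n(R) → R·1 is an R-linear map with n₀([x, y]) = 0 for all x, y ∈ M_n(R). -/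
set_option synthInstance.maxHeartbeats 1000000
set_option maxHeartbeats 1000000

/-!
Transport the Jordan product of the target through the Lie isomorphism `l`. The result is a
symmetric bilinear map on matrices which is equivariant under `ad`, and evaluating such a map on
diagonal matrix units shows that it has the form
`J(x, y) = α (xy + yx) + β (tr(x) y + tr(y) x) + (γ tr(xy) + δ tr(x) tr(y)) 1`.
Since `(ab + ba)c + c(ab + ba) - a(bc + cb) - (bc + cb)a = [b, [a, c]]` in every associative algebra
and `l` preserves brackets, `J(J(x, y), z) - J(x, J(y, z)) = [y, [x, z]]`. Comparing entries gives
`α² = 1` and makes `β`, `γ`, `δ` the coefficients that a shift `s x = x - t tr(x) 1` removes.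
Then `m = l ∘ s` satisfies `m x m y + m y m x = α m(xy + yx)` and preserves brackets, hence
`m x m y = e m(xy) - (1 - e) m(yx)` for the idempotent `e = (1 + α) / 2`; in a domain `e` is
`0` or `1`.
-/

namespace MatrixLieIso

open Matrix

attribute [local instance] LieRing.ofAssociativeRing

section EquivariantBilin

variable {R L : Type*} [CommRing R] [LieRing L] [LieAlgebra R L]

variable (R L) in
/-- Bilinear maps `P` on a Lie algebra equivariant under the adjoint action,
`⁅x, P y z⁆ = P ⁅x, y⁆ z + P y ⁅x, z⁆`, encoded as Lie module homomorphisms `L → End L`. Jordan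
products pulled back along a Lie isomorphism are of this kind. -/
abbrev EquivariantBilin : Type _ := L →ₗ⁅R, L⁆ L →ₗ[R] L

theorem lie_apply_apply (P : EquivariantBilin R L) (x y z : L) :
    ⁅x, P y z⁆ = P ⁅x, y⁆ z + P y ⁅x, z⁆ := by
  rw [LieModuleHom.map_lie, LieHom.lie_apply, sub_add_cancel]

theorem lie_apply_apply_eq_zero (P : EquivariantBilin R L) {x y z : L}
    (hy : ⁅x, y⁆ = 0) (hz : ⁅x, z⁆ = 0) : ⁅x, P y z⁆ = 0 := by
  simp [lie_apply_apply, hy, hz]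

end EquivariantBilin

section MatrixUnits

variable {ι R : Type*} [DecidableEq ι] [Fintype ι] [CommRing R]

theorem lie_single_single_of_ne {i k : ι} (hik : i ≠ k) (j : ι) :
    ⁅single i j (1 : R), single j k (1 : R)⁆ = single i k 1 := by
  simp [Ring.lie_def, hik.symm]

theorem lie_single_single_swap (i j : ι) :
    ⁅single i j (1 : R), single j i (1 : R)⁆ = single i i 1 - single j j 1 := by
  simp [Ring.lie_def]

theorem lie_single_single_eq_zero {i j k l : ι} (hjk : j ≠ k) (hil : i ≠ l) :
    ⁅single i j (1 : R), single k l (1 : R)⁆ = 0 := by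
  simp [Ring.lie_def, hjk, hil.symm]

theorem lie_single_single_diag {i j : ι} (hij : i ≠ j) :
    ⁅single i j (1 : R), single i i (1 : R)⁆ = -single i j 1 := by
  rw [← lie_skew, lie_single_single_of_ne hij]

theorem lie_single_diag_diag (i j : ι) :
    ⁅single i i (1 : R), single j j (1 : R)⁆ = 0 := by
  rcases eq_or_ne i j with rfl | hij
  · exact lie_self _
  · exact lie_single_single_eq_zero hij hij

theorem lieIdeal_eq_top_of_single_diag_mem (I : LieIdeal R (Matrix ι ι R)) {a : ι}
    (ha : single a a 1 ∈ I) : I = ⊤ := by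
  have row (k : ι) : single a k 1 ∈ I := by
    rcases eq_or_ne a k with rfl | hak
    · exact ha
    · exact lie_single_single_of_ne (R := R) hak a ▸ lie_mem_left R _ I _ _ ha
  have diag (k : ι) : single k k 1 ∈ I := by
    have hsub := I.sub_mem ha (lie_mem_left R _ I _ (single k a 1) (row k))
    rwa [lie_single_single_swap, sub_sub_cancel] at hsub
  have all (k l : ι) : single k l 1 ∈ I := by
    rcases eq_or_ne k l with rfl | hkl
    · exact diag k
    · exact lie_single_single_of_ne (R := R) hkl k ▸ lie_mem_left R _ I _ _ (diag k)
  refine eq_top_iff.mpr fun x _ ↦ ?_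
  rw [matrix_eq_sum_single x]
  refine sum_mem fun k _ ↦ sum_mem fun l _ ↦ ?_
  simpa using I.smul_mem (x k l) (all k l)

theorem eq_smul_one_add_sum_of_commute_single (S : Finset ι) (c : ι)
    {W : Matrix ι ι R} (hdiag : ∀ k, Commute (single k k 1) W)
    (hcompl : ∀ k ∉ S, Commute (single k c 1) W) :
    W = W c c • 1 + ∑ i ∈ S, (W i i - W c c) • single i i 1 := by
  ext k l
  rcases eq_or_ne k l with rfl | hkl
  · by_cases hk : k ∈ S
    · simp [Matrix.sum_apply, single_apply, hk]
    · simp [Matrix.sum_apply, single_apply, hk, diag_eq_of_commute_single (hcompl k hk)]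
  · have hsum : ∀ i, ¬(i = k ∧ i = l) := fun i ⟨hik, hil⟩ ↦ hkl (hik.symm.trans hil)
    simp [Matrix.sum_apply, hkl, hsum,
      row_eq_zero_of_commute_single (hdiag k) hkl.symm]

end MatrixUnits

section JordanTraceBilin

variable {ι R : Type*} [Fintype ι] [CommRing R]

theorem trace_lie (x y : Matrix ι ι R) : ⁅x, y⁆.trace = 0 := by
  rw [Ring.lie_def, trace_sub, trace_mul_comm, sub_self]

variable [DecidableEq ι]

/-- The equivariant symmetric bilinear maps on matrices built from the Jordan product and the
trace, the normal form of every such map when `2` is invertible and the size is at least `3`. -/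
def jordanTraceBilin (α β γ δ : R) : EquivariantBilin R (Matrix ι ι R) where
  toLinearMap := LinearMap.mk₂ R
    (fun x y ↦ α • (x * y + y * x) + β • (x.trace • y + y.trace • x) +
      (γ * (x * y).trace + δ * (x.trace * y.trace)) • (1 : Matrix ι ι R))
    (fun x y z ↦ by simp only [add_mul, mul_add, trace_add]; module)
    (fun c x y ↦ by
      simp only [smul_mul_assoc, mul_smul_comm, trace_smul, smul_eq_mul]; module)
    (fun x y z ↦ by simp only [add_mul, mul_add, trace_add]; module)
    (fun c x y ↦ by
      simp only [smul_mul_assoc, mul_smul_comm, trace_smul, smul_eq_mul]; module)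
  map_lie' {x y} := by
    ext1 z
    have htrace : (y * ⁅x, z⁆).trace = -(⁅x, y⁆ * z).trace := by
      rw [eq_neg_iff_add_eq_zero, ← trace_add, ← trace_lie x (y * z)]
      congr 1
      simp only [Ring.lie_def]
      noncomm_ring
    rw [LieHom.lie_apply, eq_sub_iff_add_eq]
    simp only [AddHom.toFun_eq_coe, LinearMap.coe_toAddHom, LinearMap.mk₂_apply, htrace, trace_lie]
    simp only [Ring.lie_def, mul_add, add_mul, mul_sub, sub_mul, mul_smul_comm, smul_mul_assoc,
      mul_one, one_mul, ← mul_assoc]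
    module

theorem jordanTraceBilin_apply (α β γ δ : R) (x y : Matrix ι ι R) :
    jordanTraceBilin α β γ δ x y =
      α • (x * y + y * x) + β • (x.trace • y + y.trace • x) +
        (γ * (x * y).trace + δ * (x.trace * y.trace)) • (1 : Matrix ι ι R) :=
  rfl

theorem jordanTraceBilin_comm (α β γ δ : R) (x y : Matrix ι ι R) :
    jordanTraceBilin α β γ δ x y = jordanTraceBilin α β γ δ y x := by
  rw [jordanTraceBilin_apply, jordanTraceBilin_apply, trace_mul_comm x y, mul_comm x.trace,
    add_comm (x * y), add_comm (x.trace • y)]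

end JordanTraceBilin

section Classification

variable {ι R : Type*} [DecidableEq ι] [Fintype ι] [CommRing R]
  (P : EquivariantBilin R (Matrix ι ι R))

theorem exists_apply_single_diag_self_eq {i c : ι} (hic : i ≠ c) :
    ∃ a b : R, P (single i i 1) (single i i 1) = a • 1 + b • single i i 1 := by
  have commute_of {k l : ι} (h : ⁅single k l (1 : R), single i i (1 : R)⁆ = 0) :
      Commute (single k l 1) (P (single i i 1) (single i i 1)) :=
    commute_iff_lie_eq.mpr (lie_apply_apply_eq_zero P h h)
  have hform := eq_smul_one_add_sum_of_commute_single {i} c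
    (fun k ↦ commute_of (lie_single_diag_diag k i))
    (fun k hk ↦ commute_of (lie_single_single_eq_zero hic.symm (by simpa using hk)))
  exact ⟨_, _, by simpa only [Finset.sum_singleton] using hform⟩

theorem exists_apply_single_diag_single_diag_eq {i j c : ι} (hij : i ≠ j) (hic : i ≠ c)
    (hjc : j ≠ c) :
    ∃ d p q : R, P (single i i 1) (single j j 1) =
      d • 1 + (p • single i i 1 + q • single j j 1) := by
  have commute_of {k l : ι} (hi : ⁅single k l (1 : R), single i i (1 : R)⁆ = 0)
      (hj : ⁅single k l (1 : R), single j j (1 : R)⁆ = 0) :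
      Commute (single k l 1) (P (single i i 1) (single j j 1)) :=
    commute_iff_lie_eq.mpr (lie_apply_apply_eq_zero P hi hj)
  have hform := eq_smul_one_add_sum_of_commute_single {i, j} c
    (fun k ↦ commute_of (lie_single_diag_diag k i) (lie_single_diag_diag k j))
    (fun k hk ↦ by
      obtain ⟨hki, hkj⟩ : k ≠ i ∧ k ≠ j := by simpa using hk
      exact commute_of (lie_single_single_eq_zero hic.symm hki)
        (lie_single_single_eq_zero hjc.symm hkj))
  exact ⟨_, _, _, by simpa only [Finset.sum_pair hij] using hform⟩

variable {P}

theorem two_smul_apply_single_single_diag (hsymm : ∀ x y, P x y = P y x) {i j : ι} (hij : i ≠ j)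
    {a b : R} (hii : P (single i i 1) (single i i 1) = a • 1 + b • single i i 1) :
    (2 : R) • P (single i j 1) (single i i 1) = b • single i j 1 := by
  have h := lie_apply_apply P (single i j 1) (single i i 1) (single i i 1)
  have hlie : ⁅single i j (1 : R), a • (1 : Matrix ι ι R) + b • single i i (1 : R)⁆ =
      -(b • single i j 1) := by
    rw [lie_add, lie_smul, lie_smul, Ring.lie_def _ 1, mul_one, one_mul, sub_self, smul_zero,
      zero_add, lie_single_single_diag hij, smul_neg]
  rw [hii, hlie, lie_single_single_diag hij, map_neg, map_neg, LinearMap.neg_apply,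
    hsymm (single i i 1), ← neg_add, ← two_smul R, neg_inj] at h
  exact h.symm

variable [Invertible (2 : R)]

theorem apply_single_diag_eq_zero (hsymm : ∀ x y, P x y = P y x) {a b : ι} (hab : a ≠ b)
    (haa : P (single a a 1) (single a a 1) = 0) (hbb : P (single a a 1) (single b b 1) = 0) :
    P (single a a 1) = 0 := by
  have lie_mem {x z : Matrix ι ι R} (hx : ⁅x, single a a (1 : R)⁆ = 0)
      (hz : P (single a a 1) z = 0) : P (single a a 1) ⁅x, z⁆ = 0 := by
    simpa [hx, hz] using (lie_apply_apply P x (single a a 1) z).symm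
  have diag (k : ι) (hk : k ≠ a) : P (single a a 1) (single k k 1) = 0 := by
    rcases eq_or_ne k b with rfl | hkb
    · exact hbb
    · have hkb_zero := lie_mem (lie_single_single_eq_zero hab.symm hk) hbb
      have hdiff := lie_mem (lie_single_single_eq_zero hk hab.symm) hkb_zero
      rw [lie_single_single_of_ne hkb, lie_single_single_swap, map_sub, hbb, zero_sub,
        neg_eq_zero] at hdiff
      exact hdiff
  have lie_diag (x : Matrix ι ι R) : P (single a a 1) ⁅x, single a a (1 : R)⁆ = 0 := by
    have h := lie_apply_apply P x (single a a 1) (single a a 1)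
    rw [haa, lie_zero, hsymm, ← two_smul R] at h
    exact (isUnit_of_invertible (2 : R)).smul_eq_zero.mp h.symm
  have all (k l : ι) : P (single a a 1) (single k l 1) = 0 := by
    rcases eq_or_ne k l with rfl | hkl
    · rcases eq_or_ne k a with rfl | hka
      · exact haa
      · exact diag k hka
    rcases eq_or_ne k a with rfl | hka
    · rw [← neg_eq_zero, ← map_neg, ← lie_single_single_diag hkl, lie_diag]
    rcases eq_or_ne l a with rfl | hla
    · rw [← lie_single_single_of_ne hkl l, lie_diag]
    · rw [← lie_single_single_of_ne hkl l]
      exact lie_mem (lie_single_single_eq_zero hla hka) (diag l hla)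
  apply ext_linearMap
  intro k l
  ext1
  simpa using all k l

theorem eq_zero_of_apply_single_diag_eq_zero (hsymm : ∀ x y, P x y = P y x) {a b : ι}
    (hab : a ≠ b) (haa : P (single a a 1) (single a a 1) = 0)
    (hbb : P (single a a 1) (single b b 1) = 0) : P = 0 := by
  have hker : P.ker = ⊤ := lieIdeal_eq_top_of_single_diag_mem P.ker
    (LieModuleHom.mem_ker.mpr (apply_single_diag_eq_zero hsymm hab haa hbb))
  ext x : 1
  exact LieModuleHom.mem_ker.mp (hker ▸ LieSubmodule.mem_top x)

theorem apply_single_self_eq_zero (hsymm : ∀ x y, P x y = P y x) {i j : ι} (hij : i ≠ j) :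
    P (single i j 1) (single i j 1) = 0 := by
  obtain ⟨a, b, hii⟩ := exists_apply_single_diag_self_eq P hij
  have hlie : ⁅single i j (1 : R), P (single i j 1) (single i i 1)⁆ =
      -P (single i j 1) (single i j 1) := by
    rw [lie_apply_apply, lie_self, map_zero, LinearMap.zero_apply, zero_add,
      lie_single_single_diag hij, map_neg]
  refine neg_eq_zero.mp ((isUnit_of_invertible (2 : R)).smul_eq_zero.mp ?_)
  rw [← hlie, ← lie_smul, two_smul_apply_single_single_diag hsymm hij hii, lie_smul, lie_self,
    smul_zero]

theorem apply_single_single_diag_eq (hsymm : ∀ x y, P x y = P y x) {i j : ι} (hij : i ≠ j) :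
    P (single i j 1) (single i i 1) = P (single i j 1) (single j j 1) := by
  have h := lie_apply_apply P (single j i 1) (single i j 1) (single i j 1)
  rw [apply_single_self_eq_zero hsymm hij, lie_zero, hsymm, ← two_smul R,
    lie_single_single_swap, map_sub] at h
  exact (sub_eq_zero.mp ((isUnit_of_invertible (2 : R)).smul_eq_zero.mp h.symm)).symm

theorem exists_apply_single_diag_single_diag_eq_of_symm (hsymm : ∀ x y, P x y = P y x) {i j c : ι}
    (hij : i ≠ j) (hic : i ≠ c) (hjc : j ≠ c) :
    ∃ d p : R, P (single i i 1) (single j j 1) = d • 1 + p • (single i i 1 + single j j 1) := by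
  obtain ⟨d, p, q, hP⟩ := exists_apply_single_diag_single_diag_eq P hij hic hjc
  suffices hqp : q = p from ⟨d, p, by rw [hP, hqp, smul_add]⟩
  have h := lie_apply_apply P (single i j 1) (single i i 1) (single j j 1)
  rw [hP, lie_single_single_diag hij,
    lie_single_single_of_ne hij, map_neg, LinearMap.neg_apply, hsymm (single i i 1),
    apply_single_single_diag_eq hsymm hij, neg_add_cancel] at h
  simpa [Ring.lie_def, mul_add, add_mul, hij, hij.symm, sub_eq_zero] using congr_fun₂ h i j

theorem exists_eq_jordanTraceBilin (hsymm : ∀ x y, P x y = P y x) (hcard : 2 < Fintype.card ι) :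
    ∃ α β γ δ : R, P = jordanTraceBilin α β γ δ := by
  obtain ⟨i, j, c, hij, hic, hjc⟩ := Fintype.two_lt_card_iff.mp hcard
  obtain ⟨a, b, hii⟩ := exists_apply_single_diag_self_eq P hij
  obtain ⟨d, p, hiijj⟩ := exists_apply_single_diag_single_diag_eq_of_symm hsymm hij hic hjc
  refine ⟨⅟2 * b - p, p, a - d, d, sub_eq_zero.mp ?_⟩
  refine eq_zero_of_apply_single_diag_eq_zero
    (fun x y ↦ by simp [hsymm x y, jordanTraceBilin_comm _ _ _ _ x y]) hij ?_ ?_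
  · have hb : (2 * (⅟2 * b - p) + 2 * p) = b := by
      rw [mul_sub, mul_invOf_cancel_left, sub_add_cancel]
    rw [LieModuleHom.sub_apply, LinearMap.sub_apply, hii, jordanTraceBilin_apply]
    simp only [single_mul_single_same, trace_single_eq_same, mul_one]
    linear_combination (norm := module) -congrArg (· • single i i (1 : R)) hb
  · rw [LieModuleHom.sub_apply, LinearMap.sub_apply, hiijj, jordanTraceBilin_apply,
      single_mul_single_of_ne _ _ _ _ hij, single_mul_single_of_ne _ _ _ _ hij.symm]
    simp only [trace_single_eq_same, trace_zero]
    module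

end Classification

section JordanPullback

variable {R L A : Type*} [CommRing R] [LieRing L] [LieAlgebra R L] [Ring A] [Algebra R A]

/-- The Jordan product `a * b + b * a` of an associative algebra transported to a Lie algebra
along a Lie isomorphism. It is not halved, so the unit acts as multiplication by `2`. -/
def jordanPullback (l : L ≃ₗ⁅R⁆ A) : EquivariantBilin R L where
  toLinearMap := ((LinearMap.mul R A + (LinearMap.mul R A).flip).compl₁₂ (l : L →ₗ[R] A)
    (l : L →ₗ[R] A)).compr₂ (l.symm : A →ₗ[R] L)
  map_lie' {x y} := by
    ext1 z
    apply EquivLike.injective l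
    rw [LieHom.lie_apply, map_sub]
    simp only [AddHom.toFun_eq_coe, LinearMap.coe_toAddHom, LinearMap.compr₂_apply,
      LinearMap.compl₁₂_apply, LinearEquiv.coe_coe, LieEquiv.coe_toLinearEquiv, LinearMap.add_apply,
      LinearMap.mul_apply_apply, LinearMap.flip_apply, LieEquiv.map_lie,
      LieEquiv.apply_symm_apply, Ring.lie_def]
    noncomm_ring

theorem map_jordanPullback (l : L ≃ₗ⁅R⁆ A) (x y : L) :
    l (jordanPullback l x y) = l x * l y + l y * l x :=
  l.apply_symm_apply _

theorem jordanPullback_comm (l : L ≃ₗ⁅R⁆ A) (x y : L) :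
    jordanPullback l x y = jordanPullback l y x :=
  EquivLike.injective l <| by rw [map_jordanPullback, map_jordanPullback, add_comm]

theorem jordanPullback_symm_one (l : L ≃ₗ⁅R⁆ A) (y : L) :
    jordanPullback l (l.symm 1) y = (2 : R) • y :=
  EquivLike.injective l <| by
    rw [map_jordanPullback, l.apply_symm_apply, one_mul, mul_one, map_smul, two_smul]

theorem jordanPullback_associator (l : L ≃ₗ⁅R⁆ A) (x y z : L) :
    jordanPullback l (jordanPullback l x y) z - jordanPullback l x (jordanPullback l y z) =
      ⁅y, ⁅x, z⁆⁆ := by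
  apply EquivLike.injective l
  rw [map_sub]
  simp only [map_jordanPullback, LieEquiv.map_lie, Ring.lie_def]
  noncomm_ring

theorem lie_symm_one (l : L ≃ₗ⁅R⁆ A) (x : L) : ⁅x, l.symm 1⁆ = 0 :=
  EquivLike.injective l <| by
    rw [LieEquiv.map_lie, l.apply_symm_apply, Ring.lie_def, mul_one, one_mul, sub_self, map_zero]

end JordanPullback

section JordanHom

variable {R A B : Type*} [CommRing R] [Invertible (2 : R)] [Ring A] [Algebra R A] [Ring B]
  [Algebra R B]

theorem isIdempotentElem_invOf_two_mul_one_add {α : R} (hα : α * α = 1) :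
    IsIdempotentElem (⅟2 * (1 + α)) := by
  rw [IsIdempotentElem]
  linear_combination ⅟2 * ⅟2 * hα + ⅟2 * (1 + α) * invOf_mul_self (2 : R)

theorem map_mul_map_eq_of_jordan (m : B →ₗ⁅R⁆ A) {α : R}
    (hm : ∀ x y, m x * m y + m y * m x = α • m (x * y + y * x)) (x y : B) :
    m x * m y = (⅟2 * (1 + α)) • m (x * y) - (1 - ⅟2 * (1 + α)) • m (y * x) := by
  have hlie : m x * m y - m y * m x = m (x * y) - m (y * x) := by
    simpa only [Ring.lie_def, map_sub] using (m.map_lie x y).symm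
  have hjordan := hm x y
  rw [map_add] at hjordan
  have hhalf : ((⅟2 : R) * 2 - 1) • (m x * m y + m (y * x)) = 0 := by simp
  linear_combination (norm := module) (⅟2 : R) • hlie + (⅟2 : R) • hjordan - hhalf

end JordanHom

section TraceShift

variable {ι R : Type*} [DecidableEq ι] [Fintype ι] [CommRing R]

/-- The Lie automorphism `x ↦ x - t tr(x) 1` of the matrix algebra, used to remove the trace
terms of a `jordanTraceBilin`. The scalar `v` is the inverse of `1 - t tr(1)`, by which the map
multiplies traces. -/
def traceShift (t v : R) (hv : (1 - t * Fintype.card ι) * v = 1) :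
    Matrix ι ι R ≃ₗ⁅R⁆ Matrix ι ι R where
  toFun x := x - (t * x.trace) • 1
  invFun y := y + (t * v * y.trace) • 1
  map_add' x y := by rw [trace_add]; module
  map_smul' c x := by simp only [trace_smul, smul_eq_mul, RingHom.id_apply]; module
  map_lie' {x y} := by
    simp only [trace_lie, mul_zero, zero_smul, sub_zero]
    simp only [Ring.lie_def, mul_sub, sub_mul, smul_mul_assoc, mul_smul_comm, one_mul, mul_one]
    module
  left_inv x := by
    simp only [trace_sub, trace_smul, trace_one, smul_eq_mul]
    linear_combination (norm := module) (t * x.trace) • congrArg (· • (1 : Matrix ι ι R)) hv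
  right_inv y := by
    simp only [trace_add, trace_smul, trace_one, smul_eq_mul]
    linear_combination (norm := module) (t * y.trace) • congrArg (· • (1 : Matrix ι ι R)) hv

theorem traceShift_apply (t v : R) (hv : (1 - t * Fintype.card ι) * v = 1) (x : Matrix ι ι R) :
    traceShift t v hv x = x - (t * x.trace) • 1 :=
  rfl

end TraceShift

section Coefficients

variable {ι R : Type*} [DecidableEq ι] [Fintype ι] [CommRing R] {α β γ δ : R}

theorem jordanTraceBilin_one_apply (α β γ δ : R) (y : Matrix ι ι R) :
    jordanTraceBilin α β γ δ 1 y =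
      (2 * α + Fintype.card ι * β) • y + ((β + γ + Fintype.card ι * δ) * y.trace) • 1 := by
  simp only [jordanTraceBilin_apply, one_mul, mul_one, trace_one]
  module

variable (hassoc : ∀ x y z : Matrix ι ι R,
  jordanTraceBilin α β γ δ (jordanTraceBilin α β γ δ x y) z -
    jordanTraceBilin α β γ δ x (jordanTraceBilin α β γ δ y z) = ⁅y, ⁅x, z⁆⁆)

include hassoc in
theorem mul_self_eq_one_of_associator {i j c : ι} (hij : i ≠ j) (hic : i ≠ c) (hjc : j ≠ c) :
    α * α = 1 := by
  have h := congr_fun₂ (hassoc (single i j 1) (single j c 1) (single c i 1)) c c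
  simpa [jordanTraceBilin_apply, Ring.lie_def, hij, hic, hjc, hij.symm, hic.symm, hjc.symm] using h

variable {w : R} (hone : ∀ y : Matrix ι ι R, jordanTraceBilin α β γ δ 1 y = (2 * w) • y)

include hassoc hone in
theorem mul_add_mul_eq_zero_of_associator [Invertible (2 : R)] {i j c : ι}
    (hij : i ≠ j) (hic : i ≠ c) (hjc : j ≠ c) : α * β + γ * w = 0 := by
  have h := congr_fun₂ (hassoc (single i j 1) (single j i 1) (single i c 1)) i c
  rw [jordanTraceBilin_apply _ _ _ _ (single i j 1) (single j i 1)] at h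
  simp only [map_add, map_smul, LinearMap.add_apply, LinearMap.smul_apply, hone] at h
  have hentry : α * α + α * β + α * β + γ * (2 * w) - α * α = 0 := by
    simpa [jordanTraceBilin_apply, Ring.lie_def, hij, hic, hjc, hij.symm, hic.symm, hjc.symm]
      using h
  linear_combination ⅟2 * hentry - (α * β + γ * w) * invOf_mul_self (2 : R)

include hassoc hone in
theorem two_mul_mul_eq_neg_sq_of_associator {i j c : ι} (hij : i ≠ j) (hic : i ≠ c) (hjc : j ≠ c) :
    2 * w * δ = -β ^ 2 := by
  have h := congr_fun₂ (hassoc (single i i 1) (single j j 1) (single i j 1)) i j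
  rw [jordanTraceBilin_apply _ _ _ _ (single i i 1) (single j j 1)] at h
  simp only [map_add, map_smul, LinearMap.add_apply, LinearMap.smul_apply, hone] at h
  have hentry : β * α + β * β + (β * α + β * β) + δ * (2 * w) -
      (α * (α + β) + (β * α + β * β)) = -1 := by
    simpa [jordanTraceBilin_apply, Ring.lie_def, hij, hij.symm] using h
  linear_combination hentry + mul_self_eq_one_of_associator hassoc hij hic hjc

include hone in
theorem jordanTraceBilin_traceShift {t v : R} (hv : (1 - t * Fintype.card ι) * v = 1)
    (hβ : β = 2 * w * t) (hγ : γ = -2 * α * t) (hδ : δ = -β * t) (x y : Matrix ι ι R) :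
    jordanTraceBilin α β γ δ (traceShift t v hv x) (traceShift t v hv y) =
      α • traceShift t v hv (x * y + y * x) := by
  have hone' (y : Matrix ι ι R) : jordanTraceBilin α β γ δ y 1 = (2 * w) • y := by
    rw [jordanTraceBilin_comm, hone]
  simp only [traceShift_apply, map_sub, LinearMap.sub_apply, map_smul, LinearMap.smul_apply, hone,
    hone']
  rw [jordanTraceBilin_apply, trace_add, trace_mul_comm y x, hγ, hδ, hβ]
  module

theorem exists_jordanTraceBilin_one_eq_smul [Invertible (2 : R)] {i j : ι} (hij : i ≠ j) {u : R}
    (hu : ∀ y : Matrix ι ι R, u • jordanTraceBilin α β γ δ 1 y = (2 : R) • y) :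
    ∃ w, u * w = 1 ∧ ∀ y : Matrix ι ι R, jordanTraceBilin α β γ δ 1 y = (2 * w) • y := by
  have hentry : u * (2 * α + Fintype.card ι * β) = 2 := by
    simpa [jordanTraceBilin_one_apply, hij] using congr_fun₂ (hu (single i j 1)) i j
  have huw : u * (⅟2 * (2 * α + Fintype.card ι * β)) = 1 := by
    rw [mul_left_comm, hentry, invOf_mul_self]
  refine ⟨_, huw, fun y ↦ ?_⟩
  rw [mul_smul, smul_comm, ← hu y, smul_smul, mul_comm, huw, one_smul]

include hassoc hone in
theorem exists_jordanTraceBilin_traceShift [Invertible (2 : R)] {u : R} (huw : u * w = 1)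
    {i j c : ι} (hij : i ≠ j) (hic : i ≠ c) (hjc : j ≠ c) :
    ∃ (t v : R) (hv : (1 - t * Fintype.card ι) * v = 1), ∀ x y : Matrix ι ι R,
      jordanTraceBilin α β γ δ (traceShift t v hv x) (traceShift t v hv y) =
        α • traceShift t v hv (x * y + y * x) := by
  have hα := mul_self_eq_one_of_associator hassoc hij hic hjc
  have hβγ := mul_add_mul_eq_zero_of_associator hassoc hone hij hic hjc
  have hδ := two_mul_mul_eq_neg_sq_of_associator hassoc hone hij hic hjc
  have hw : 2 * α + Fintype.card ι * β = 2 * w := by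
    simpa [jordanTraceBilin_one_apply, hij] using congr_fun₂ (hone (single i j 1)) i j
  have htwo := invOf_mul_self (2 : R)
  have htrace : 1 - ⅟2 * u * β * Fintype.card ι = u * α := by
    linear_combination -⅟2 * u * hw - u * w * htwo + α * u * htwo - huw
  have hv : (1 - ⅟2 * u * β * Fintype.card ι) * (w * α) = 1 := by
    rw [htrace, mul_mul_mul_comm, huw, hα, one_mul]
  refine ⟨⅟2 * u * β, w * α, hv, jordanTraceBilin_traceShift hone hv ?_ ?_ ?_⟩
  · linear_combination -(w * u * β) * htwo - β * huw
  · linear_combination u * hβγ - γ * huw + α * u * β * htwo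
  · linear_combination ⅟2 * u * hδ - δ * huw - w * u * δ * htwo

end Coefficients

section Main

variable {ι R A : Type*} [DecidableEq ι] [Fintype ι] [CommRing R] [Ring A] [Algebra R A]

theorem exists_symm_one_eq_smul_one (l : Matrix ι ι R ≃ₗ⁅R⁆ A) : ∃ u : R, l.symm 1 = u • 1 := by
  obtain ⟨u, hu⟩ := mem_range_scalar_of_commute_single
    fun i j _ ↦ commute_iff_lie_eq.mpr (lie_symm_one l (single i j 1))
  exact ⟨u, by rw [← hu, scalar_apply, smul_one_eq_diagonal]⟩

theorem exists_traceShift_jordan [Invertible (2 : R)] (hcard : 2 < Fintype.card ι)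
    (l : Matrix ι ι R ≃ₗ⁅R⁆ A) :
    ∃ (α w t v : R) (hv : (1 - t * Fintype.card ι) * v = 1), α * α = 1 ∧ l 1 = w • 1 ∧
      ∀ x y, l (traceShift t v hv x) * l (traceShift t v hv y) +
        l (traceShift t v hv y) * l (traceShift t v hv x) =
          α • l (traceShift t v hv (x * y + y * x)) := by
  obtain ⟨i, j, c, hij, hic, hjc⟩ := Fintype.two_lt_card_iff.mp hcard
  obtain ⟨α, β, γ, δ, hJ⟩ := exists_eq_jordanTraceBilin (jordanPullback_comm l) hcard
  obtain ⟨u, hu⟩ := exists_symm_one_eq_smul_one l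
  have hassoc := jordanPullback_associator l
  have hone := jordanPullback_symm_one l
  simp only [hu, hJ, map_smul, LinearMap.smul_apply] at hassoc hone
  obtain ⟨w, huw, hw⟩ := exists_jordanTraceBilin_one_eq_smul hij hone
  obtain ⟨t, v, hv, hshift⟩ := exists_jordanTraceBilin_traceShift hassoc hw huw hij hic hjc
  have hl : l 1 = w • 1 := by
    rw [← l.apply_symm_apply 1, hu, map_smul, smul_smul, mul_comm, huw, one_smul]
  refine ⟨α, w, t, v, hv, mul_self_eq_one_of_associator hassoc hij hic hjc, hl, fun x y ↦ ?_⟩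
  rw [← map_jordanPullback, hJ, hshift, map_smul]

theorem exists_lieEquiv_add_trace [Invertible (2 : R)] (hcard : 2 < Fintype.card ι)
    (l : Matrix ι ι R ≃ₗ⁅R⁆ A) :
    ∃ (e r : R) (m : Matrix ι ι R ≃ₗ⁅R⁆ A), IsIdempotentElem e ∧
      (∀ x, l x = m x + algebraMap R A (r * x.trace)) ∧
      ∀ x y, m x * m y = e • m (x * y) - (1 - e) • m (y * x) := by
  obtain ⟨α, w, t, v, hv, hα, hl, hjordan⟩ := exists_traceShift_jordan hcard l
  refine ⟨⅟2 * (1 + α), t * w, (traceShift t v hv).trans l,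
    isIdempotentElem_invOf_two_mul_one_add hα, fun x ↦ ?_,
    map_mul_map_eq_of_jordan ((traceShift t v hv).trans l : Matrix ι ι R →ₗ⁅R⁆ A) hjordan⟩
  rw [LieEquiv.trans_apply, traceShift_apply, map_sub, map_smul, hl, smul_smul,
    Algebra.algebraMap_eq_smul_one, mul_right_comm, sub_add_cancel]

end Main

end MatrixLieIso

attribute [local instance] LieRing.ofAssociativeRing in
theorem stmt17_general {ι R A : Type*} [Fintype ι] (hcard : 2 < Fintype.card ι)
    [CommRing R] [Invertible (2 : R)] [Ring A] [Algebra R A] (l : Matrix ι ι R ≃ₗ[R] A)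
    (hLie : ∀ x y, l (x * y - y * x) = l x * l y - l y * l x) :
    ∃ (e : R) (m : Matrix ι ι R ≃ₗ[R] A) (n₀ : Matrix ι ι R →ₗ[R] R), IsIdempotentElem e ∧
      (∀ x, l x = m x + algebraMap R A (n₀ x)) ∧
      (∀ x y, m x * m y = e • m (x * y) - (1 - e) • m (y * x)) ∧
      ∀ x y, n₀ (x * y - y * x) = 0 := by
  classical
  obtain ⟨e, r, m, he, hlm, hmul⟩ :=
    MatrixLieIso.exists_lieEquiv_add_trace hcard { l with map_lie' := hLie _ _ }
  exact ⟨e, m.toLinearEquiv, r • Matrix.traceLinearMap ι R R, he, hlm, hmul,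
    fun x y ↦ by simp [Matrix.trace_mul_comm x y]⟩

/-- **Corollary 4.7.**  Let `n ≥ 3` and let `R` be a commutative domain with
`1/2 ∈ R`.  If `l : M_n(R) → M_n(R)` is a Lie isomorphism of the full algebra of
`n × n` matrices over `R`, then `l = m + n₀`, where `m` is an algebra isomorphism or
the negative of an algebra anti-isomorphism and `n₀ : M_n(R) → R·1` is a linear map
vanishing on each commutator. -/
theorem stmt17 (n : ℕ) (hn : 3 ≤ n) (R : Type*) [CommRing R] [IsDomain R]
    [Invertible (2 : R)]
    (l : Matrix (Fin n) (Fin n) R ≃ₗ[R] Matrix (Fin n) (Fin n) R)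
    (hLie : ∀ x y : Matrix (Fin n) (Fin n) R,
      l (x * y - y * x) = l x * l y - l y * l x) :
    ∃ m n₀ : Matrix (Fin n) (Fin n) R →ₗ[R] Matrix (Fin n) (Fin n) R,
      (∀ x : Matrix (Fin n) (Fin n) R, l x = m x + n₀ x) ∧
      Function.Bijective m ∧
      ((∀ x y : Matrix (Fin n) (Fin n) R, m (x * y) = m x * m y) ∨
        (∀ x y : Matrix (Fin n) (Fin n) R, m (x * y) = -(m y * m x))) ∧
      (∀ x : Matrix (Fin n) (Fin n) R,
        ∃ r : R, n₀ x = algebraMap R (Matrix (Fin n) (Fin n) R) r) ∧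
      (∀ x y : Matrix (Fin n) (Fin n) R, n₀ (x * y - y * x) = 0) := by
  obtain ⟨e, m, n₀, he, hlm, hmul, hn₀⟩ := stmt17_general (by rwa [Fintype.card_fin]) l hLie
  refine ⟨m, Algebra.linearMap R _ ∘ₗ n₀, hlm, m.bijective, ?_, fun x ↦ ⟨n₀ x, rfl⟩,
    fun x y ↦ by simp [hn₀]⟩
  rcases IsIdempotentElem.iff_eq_zero_or_one.mp he with rfl | rfl
  · exact .inr fun x y ↦ by simp [hmul]
  · exact .inl fun x y ↦ by simp [hmul]
end
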